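/- Fix an integer k ≥ 2 and a real t with t_c < t < 1, where t_c = (k−1)/(k+1). Then for every φ with 0 ≤ φ < φ_e(t) and every n ≥ 1, one has B̃_{φ,t,k+1}(B̃_{φ,t,k}^{n−1}(φ)) < π. In particular, for t_c < t < 1 the full (unrooted) Cayley tree with branching number k has no Lee–Yang zeros with argument in [0, φ_e(t)). -/

import Mathlib

/-- The Blaschke product `B_{z,t,k}(w) = z·((w + t)/(1 + w·t))^k`. -/
noncomputable def Blaschke (z : ℂ) (t : ℝ) (k : ℕ) (w : ℂ) : ℂ :=
  z * ((w + (t : ℂ)) / (1 + w * (t : ℂ))) ^ k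

/-- The root with nonnegative imaginary part of the quadratic
`t·w² + ((k+1)·t² − (k−1))·w + t = 0` (for `t_c ≤ t < 1` the discriminant
`(k+1)²t⁴ − 2(k²+1)t² + (k−1)²` is `≤ 0`, so the root is
`(−b + i·√(−disc))/(2t)` with `b = (k+1)t² − (k−1)`). -/
noncomputable def wbullet (k : ℕ) (t : ℝ) : ℂ :=
  (-((((k : ℂ)) + 1) * (t : ℂ)^2 - ((k : ℂ) - 1)) +
    Complex.I * ((Real.sqrt (-(((k : ℝ) + 1)^2 * t^4 - 2 * ((k : ℝ)^2 + 1) * t^2 +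
      ((k : ℝ) - 1)^2)) : ℝ) : ℂ)) / (2 * (t : ℂ))

/-- The edge angle `φ_e(t) = Arg(w_•(t)·((1 + w_•(t)·t)/(w_•(t) + t))^k)`. -/
noncomputable def phie (k : ℕ) (t : ℝ) : ℝ :=
  (wbullet k t * ((1 + wbullet k t * (t : ℂ)) / (wbullet k t + (t : ℂ))) ^ k).arg

/-- `(z,t)` lies below the `φ_e` curve: either `0 ≤ t < t_c`, or
`t_c ≤ t < 1` and `φ_e(t) < |Arg z| ≤ π`. -/
def belowCurve (k : ℕ) (t : ℝ) (z : ℂ) : Prop :=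
  (0 ≤ t ∧ t < ((k : ℝ) - 1) / ((k : ℝ) + 1)) ∨
  (((k : ℝ) - 1) / ((k : ℝ) + 1) ≤ t ∧ t < 1 ∧ phie k t < |z.arg| ∧ |z.arg| ≤ Real.pi)

/-- The lift of the Blaschke product `B_{e^{iφ},t,k}` to `ℝ`:
`B̃_{φ,t,k}(θ) = k·θ − 2k·arctan(t·sin θ/(1 + t·cos θ)) + φ`. -/
noncomputable def Blift (φ t : ℝ) (k : ℕ) (θ : ℝ) : ℝ :=
  (k : ℝ) * θ - 2 * (k : ℝ) * Real.arctan (t * Real.sin θ / (1 + t * Real.cos θ)) + φ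

/-!
The lift `B̃_{φ,t,k}` is `k · β + φ`, where `β` is the increasing lift of the Möbius map
`w ↦ (w + t) / (1 + w t)` of the circle. The point `w_• = exp (i θ_•)` is where `k · β' = 1`; since
`β'` increases on `[0, π]`, the function `θ - k · β θ` increases on `[0, θ_•]`, so its value at
`θ_•` lies in `[0, π]` and equals `φ_e`. Hence `B̃_{φ_e,t,k}` fixes `θ_•`, and for `φ ≤ φ_e`
monotonicity keeps the orbit of `φ` below `θ_•`. One application of `B̃_{φ,t,k+1}` then yields at
most `θ_• + β θ_•`, which is less than `π` because `-t < cos θ_•`.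
-/

section

open scoped Real
open Real (sin cos arctan)
open Complex (I)

variable {k : ℕ} {t θ φ : ℝ}

theorem one_add_mul_cos_pos (ht : |t| < 1) (θ : ℝ) : 0 < 1 + t * cos θ := by
  have h : |t * cos θ| < 1 := by
    rw [abs_mul]
    exact mul_lt_one_of_nonneg_of_lt_one_left (abs_nonneg t) ht (Real.abs_cos_le_one θ)
  linarith [neg_abs_le (t * cos θ)]

theorem one_add_two_mul_cos_add_sq_pos (ht : |t| < 1) (θ : ℝ) :
    0 < 1 + 2 * t * cos θ + t ^ 2 :=
  calc
    0 < (1 + t * cos θ) ^ 2 + (t * sin θ) ^ 2 :=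
      add_pos_of_pos_of_nonneg (pow_pos (one_add_mul_cos_pos ht θ) 2) (sq_nonneg _)
    _ = 1 + 2 * t * cos θ + t ^ 2 := by linear_combination t ^ 2 * Real.sin_sq_add_cos_sq θ

theorem one_add_ofReal_mul_I_ne_zero (x : ℝ) : 1 + x * I ≠ 0 := fun h ↦ by
  simpa using congrArg Complex.re h

theorem one_sub_ofReal_mul_I_ne_zero (x : ℝ) : 1 - x * I ≠ 0 := fun h ↦ by
  simpa using congrArg Complex.re h

theorem exp_two_mul_arctan_mul_I (x : ℝ) :
    Complex.exp (2 * arctan x * I) = (1 + x * I) / (1 - x * I) := by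
  rw [Complex.ofReal_arctan, Complex.arctan,
    show 2 * (-I / 2 * Complex.log ((1 + x * I) / (1 - x * I))) * I =
      Complex.log ((1 + x * I) / (1 - x * I)) by
        linear_combination -Complex.log ((1 + x * I) / (1 - x * I)) * Complex.I_sq]
  exact Complex.exp_log
    (div_ne_zero (one_add_ofReal_mul_I_ne_zero x) (one_sub_ofReal_mul_I_ne_zero x))

/-- The lift to `ℝ` of the circle map `w ↦ (w + t) / (1 + w t)`, for `|t| < 1`, that fixes `0`;
it is the building block of `Blift`. -/
noncomputable def mobiusLift (t θ : ℝ) : ℝ :=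
  θ - 2 * arctan (t * sin θ / (1 + t * cos θ))

theorem Blift_eq_mul_mobiusLift_add (φ t : ℝ) (k : ℕ) (θ : ℝ) :
    Blift φ t k θ = k * mobiusLift t θ + φ := by
  rw [Blift, mobiusLift]
  ring

@[simp]
theorem mobiusLift_zero (t : ℝ) : mobiusLift t 0 = 0 := by
  simp [mobiusLift]

theorem exp_mobiusLift_mul_I (ht : |t| < 1) (θ : ℝ) :
    Complex.exp (mobiusLift t θ * I) =
      (Complex.exp (θ * I) + t) / (1 + Complex.exp (θ * I) * t) := by
  set s := t * sin θ / (1 + t * cos θ) with hs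
  have hpos := one_add_mul_cos_pos ht θ
  have hc : (1 + t * cos θ : ℂ) ≠ 0 := by exact_mod_cast hpos.ne'
  have hsin : (1 + t * cos θ) * s = (t * sin θ : ℂ) := by
    exact_mod_cast mul_div_cancel₀ (t * sin θ) hpos.ne'
  have hexp : Complex.exp (θ * I) = cos θ + sin θ * I := by
    rw [Complex.exp_mul_I, Complex.ofReal_cos, Complex.ofReal_sin]
  have hunit : (sin θ ^ 2 + cos θ ^ 2 : ℂ) = 1 := by exact_mod_cast Real.sin_sq_add_cos_sq θ
  have hden : 1 + Complex.exp (θ * I) * t = (1 + t * cos θ) * (1 + s * I) := by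
    rw [hexp]
    linear_combination -I * hsin
  have hnum : Complex.exp (θ * I) + t =
      Complex.exp (θ * I) * ((1 + t * cos θ) * (1 - s * I)) := by
    rw [hexp]
    linear_combination
      (cos θ + sin θ * I) * I * hsin - t * hunit + t * sin θ ^ 2 * Complex.I_sq
  rw [hnum, hden, mobiusLift, ← hs, Complex.ofReal_sub, sub_mul, Complex.exp_sub,
    Complex.ofReal_mul, Complex.ofReal_ofNat, exp_two_mul_arctan_mul_I]
  have := one_add_ofReal_mul_I_ne_zero s
  have := one_sub_ofReal_mul_I_ne_zero s
  field_simp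

theorem hasDerivAt_mobiusLift (ht : |t| < 1) (θ : ℝ) :
    HasDerivAt (mobiusLift t) ((1 - t ^ 2) / (1 + 2 * t * cos θ + t ^ 2)) θ := by
  have hc := one_add_mul_cos_pos ht θ
  have hd := one_add_two_mul_cos_add_sq_pos ht θ
  have hnorm : (1 + t * cos θ) ^ 2 + (t * sin θ) ^ 2 = 1 + 2 * t * cos θ + t ^ 2 := by
    linear_combination t ^ 2 * Real.sin_sq_add_cos_sq θ
  have hsq : 1 + (t * sin θ / (1 + t * cos θ)) ^ 2 =
      (1 + 2 * t * cos θ + t ^ 2) / (1 + t * cos θ) ^ 2 := by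
    rw [← hnorm]
    field_simp
  have hquot : HasDerivAt (fun x ↦ t * sin x / (1 + t * cos x))
      ((t * cos θ * (1 + t * cos θ) - t * sin θ * (t * -sin θ)) / (1 + t * cos θ) ^ 2) θ :=
    ((Real.hasDerivAt_sin θ).const_mul t).fun_div
      (((Real.hasDerivAt_cos θ).const_mul t).const_add 1) hc.ne'
  refine ((hasDerivAt_id θ).sub (hquot.arctan.const_mul 2)).congr_deriv ?_
  rw [hsq]
  field_simp
  linear_combination -2 * t ^ 2 * Real.sin_sq_add_cos_sq θ

theorem mobiusLift_monotone (ht : |t| < 1) : Monotone (mobiusLift t) :=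
  monotone_of_hasDerivAt_nonneg (hasDerivAt_mobiusLift ht) fun θ ↦
    div_nonneg (sub_nonneg.2 ((sq_le_one_iff_abs_le_one t).2 ht.le))
      (one_add_two_mul_cos_add_sq_pos ht θ).le

theorem mobiusLift_nonneg (ht : |t| < 1) (hθ : 0 ≤ θ) : 0 ≤ mobiusLift t θ := by
  simpa using mobiusLift_monotone ht hθ

theorem Blift_monotone (ht : |t| < 1) (φ : ℝ) (k : ℕ) : Monotone (Blift φ t k) := by
  simp only [funext (Blift_eq_mul_mobiusLift_add φ t k)]
  exact ((mobiusLift_monotone ht).const_mul k.cast_nonneg).add_const φ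

-- The hypothesis on `θ` says `a * mobiusLift' θ ≤ 1`; it propagates to `[0, θ]` as `cos` decreases.
theorem mul_mobiusLift_le_self {a : ℝ} (ht0 : 0 ≤ t) (ht1 : t < 1) (hθ0 : 0 ≤ θ) (hθπ : θ ≤ π)
    (h : a * (1 - t ^ 2) ≤ 1 + 2 * t * cos θ + t ^ 2) : a * mobiusLift t θ ≤ θ := by
  have ht : |t| < 1 := by rwa [abs_of_nonneg ht0]
  have hderiv (x : ℝ) : HasDerivAt (fun x ↦ x - a * mobiusLift t x)
      (1 - a * ((1 - t ^ 2) / (1 + 2 * t * cos x + t ^ 2))) x :=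
    (hasDerivAt_id x).sub ((hasDerivAt_mobiusLift ht x).const_mul a)
  have hmono : MonotoneOn (fun x ↦ x - a * mobiusLift t x) (Set.Icc 0 θ) := by
    refine monotoneOn_of_hasDerivWithinAt_nonneg (convex_Icc 0 θ)
      (fun x _ ↦ (hderiv x).continuousAt.continuousWithinAt)
      (fun x _ ↦ (hderiv x).hasDerivWithinAt) fun x hx ↦ ?_
    rw [interior_Icc] at hx
    have hcos : cos θ ≤ cos x := Real.cos_le_cos_of_nonneg_of_le_pi hx.1.le hθπ hx.2.le
    rw [sub_nonneg, ← mul_div_assoc, div_le_one (one_add_two_mul_cos_add_sq_pos ht x)]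
    linarith [mul_le_mul_of_nonneg_left hcos ht0]
  simpa using hmono (Set.left_mem_Icc.2 hθ0) (Set.right_mem_Icc.2 hθ0) hθ0

theorem add_mobiusLift_lt_pi (ht : |t| < 1) (hθ0 : 0 ≤ θ) (hθπ : θ ≤ π) (h : -t < cos θ) :
    θ + mobiusLift t θ < π := by
  rcases hθ0.eq_or_lt with rfl | hθ0
  · simpa using Real.pi_pos
  have hθπ : θ < π := hθπ.lt_of_ne fun hθ ↦ by
    rw [hθ, Real.cos_pi] at h
    linarith [le_abs_self t]
  suffices hlt : θ - π / 2 < arctan (t * sin θ / (1 + t * cos θ)) by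
    rw [mobiusLift]
    linarith
  rw [← Real.arctan_tan (x := θ - π / 2) (by linarith) (by linarith), Real.arctan_lt_arctan_iff,
    Real.tan_eq_sin_div_cos, Real.sin_sub_pi_div_two, Real.cos_sub_pi_div_two,
    div_lt_div_iff₀ (Real.sin_pos_of_pos_of_lt_pi hθ0 hθπ) (one_add_mul_cos_pos ht θ)]
  linear_combination h - t * Real.sin_sq_add_cos_sq θ

theorem wbullet_eq (k : ℕ) (t : ℝ) :
    wbullet k t = (((k - 1) - (k + 1) * t ^ 2) / (2 * t) : ℝ) +
      (√(-((k + 1) ^ 2 * t ^ 4 - 2 * (k ^ 2 + 1) * t ^ 2 + (k - 1) ^ 2)) / (2 * t) : ℝ) * I := by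
  rw [wbullet]
  push_cast
  ring

theorem wbullet_re (k : ℕ) (t : ℝ) :
    (wbullet k t).re = ((k - 1) - (k + 1) * t ^ 2) / (2 * t) := by
  simp only [wbullet_eq, Complex.add_re, Complex.ofReal_re, Complex.re_ofReal_mul, Complex.I_re,
    mul_zero, add_zero]

theorem wbullet_im (k : ℕ) (t : ℝ) :
    (wbullet k t).im =
      √(-((k + 1) ^ 2 * t ^ 4 - 2 * (k ^ 2 + 1) * t ^ 2 + (k - 1) ^ 2)) / (2 * t) := by
  simp only [wbullet_eq, Complex.add_im, Complex.ofReal_im, Complex.im_ofReal_mul, Complex.I_im,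
    mul_one, zero_add]

theorem wbullet_discriminant_nonpos (hk : 1 ≤ k) (htc : ((k : ℝ) - 1) / (k + 1) ≤ t)
    (ht1 : t < 1) :
    ((k : ℝ) + 1) ^ 2 * t ^ 4 - 2 * (k ^ 2 + 1) * t ^ 2 + (k - 1) ^ 2 ≤ 0 := by
  have hk' : (0 : ℝ) ≤ k - 1 := sub_nonneg.2 (by exact_mod_cast hk)
  have hkt : (k : ℝ) - 1 ≤ t * (k + 1) := (div_le_iff₀ (by positivity)).1 htc
  have ht0 : 0 ≤ t := (div_nonneg hk' (by positivity)).trans htc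
  have hsq : ((k : ℝ) - 1) ^ 2 ≤ (t * (k + 1)) ^ 2 := pow_le_pow_left₀ hk' hkt 2
  have ht2 : t ^ 2 ≤ 1 := pow_le_one₀ ht0 ht1.le
  calc
    ((k : ℝ) + 1) ^ 2 * t ^ 4 - 2 * (k ^ 2 + 1) * t ^ 2 + (k - 1) ^ 2 =
        -((1 - t ^ 2) * ((t * (k + 1)) ^ 2 - (k - 1) ^ 2)) := by ring
    _ ≤ 0 := neg_nonpos.2 (mul_nonneg (sub_nonneg.2 ht2) (sub_nonneg.2 hsq))

theorem norm_wbullet (hk : 1 ≤ k) (ht0 : 0 < t) (htc : ((k : ℝ) - 1) / (k + 1) ≤ t)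
    (ht1 : t < 1) : ‖wbullet k t‖ = 1 := by
  rw [← sq_eq_sq₀ (norm_nonneg _) zero_le_one, one_pow, Complex.sq_norm, Complex.normSq_apply,
    wbullet_re, wbullet_im, ← sq, ← sq, div_pow, div_pow,
    Real.sq_sqrt (neg_nonneg.2 (wbullet_discriminant_nonpos hk htc ht1))]
  field_simp
  ring

theorem arg_wbullet_nonneg (k : ℕ) (ht0 : 0 ≤ t) : 0 ≤ (wbullet k t).arg := by
  rw [Complex.arg_nonneg_iff, wbullet_im]
  positivity

theorem exp_arg_wbullet_mul_I (hk : 1 ≤ k) (ht0 : 0 < t) (htc : ((k : ℝ) - 1) / (k + 1) ≤ t)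
    (ht1 : t < 1) : Complex.exp ((wbullet k t).arg * I) = wbullet k t := by
  simpa [norm_wbullet hk ht0 htc ht1] using Complex.norm_mul_exp_arg_mul_I (wbullet k t)

theorem two_mul_cos_arg_wbullet (hk : 1 ≤ k) (ht0 : 0 < t)
    (htc : ((k : ℝ) - 1) / (k + 1) ≤ t) (ht1 : t < 1) :
    2 * t * cos (wbullet k t).arg = (k - 1) - (k + 1) * t ^ 2 := by
  have hnorm := norm_wbullet hk ht0 htc ht1
  have hne : wbullet k t ≠ 0 := norm_ne_zero_iff.1 (by simp [hnorm])
  rw [Complex.cos_arg hne, hnorm, div_one, wbullet_re]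
  field_simp

theorem neg_lt_cos_arg_wbullet (hk : 2 ≤ k) (ht0 : 0 < t)
    (htc : ((k : ℝ) - 1) / (k + 1) ≤ t) (ht1 : t < 1) : -t < cos (wbullet k t).arg := by
  have hk' : (1 : ℝ) < k := by exact_mod_cast hk
  have hpos : 0 < ((k : ℝ) - 1) * (1 - t ^ 2) :=
    mul_pos (sub_pos.2 hk') (sub_pos.2 (pow_lt_one₀ ht0.le ht1 two_ne_zero))
  have hcos := two_mul_cos_arg_wbullet (one_le_two.trans hk) ht0 htc ht1
  refine lt_of_mul_lt_mul_left ?_ (mul_pos two_pos ht0).le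
  linarith

theorem mul_mobiusLift_arg_wbullet_le (hk : 1 ≤ k) (ht0 : 0 < t)
    (htc : ((k : ℝ) - 1) / (k + 1) ≤ t) (ht1 : t < 1) :
    k * mobiusLift t (wbullet k t).arg ≤ (wbullet k t).arg := by
  refine mul_mobiusLift_le_self ht0.le ht1 (arg_wbullet_nonneg k ht0.le) (Complex.arg_le_pi _) ?_
  linarith [two_mul_cos_arg_wbullet hk ht0 htc ht1]

theorem phie_eq (hk : 1 ≤ k) (ht0 : 0 < t) (htc : ((k : ℝ) - 1) / (k + 1) ≤ t) (ht1 : t < 1) :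
    phie k t = (wbullet k t).arg - k * mobiusLift t (wbullet k t).arg := by
  have ht : |t| < 1 := by rwa [abs_of_pos ht0]
  have hle := mul_mobiusLift_arg_wbullet_le hk ht0 htc ht1
  have hnonneg : 0 ≤ k * mobiusLift t (wbullet k t).arg :=
    mul_nonneg k.cast_nonneg (mobiusLift_nonneg ht (arg_wbullet_nonneg k ht0.le))
  have hexp : wbullet k t * ((1 + wbullet k t * t) / (wbullet k t + t)) ^ k =
      Complex.exp (((wbullet k t).arg - k * mobiusLift t (wbullet k t).arg : ℝ) * I) := by
    rw [← inv_div, inv_pow, ← div_eq_mul_inv]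
    nth_rw 1 2 3 [← exp_arg_wbullet_mul_I hk ht0 htc ht1]
    rw [← exp_mobiusLift_mul_I ht, ← Complex.exp_nat_mul, ← Complex.exp_sub]
    push_cast
    ring_nf
  rw [phie, hexp, Complex.arg_exp_mul_I, toIocMod_eq_self]
  constructor <;> linarith [Real.pi_pos, Complex.arg_le_pi (wbullet k t)]

theorem phie_le_arg_wbullet (hk : 1 ≤ k) (ht0 : 0 < t) (htc : ((k : ℝ) - 1) / (k + 1) ≤ t)
    (ht1 : t < 1) : phie k t ≤ (wbullet k t).arg := by
  have ht : |t| < 1 := by rwa [abs_of_pos ht0]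
  rw [phie_eq hk ht0 htc ht1, sub_le_self_iff]
  exact mul_nonneg k.cast_nonneg (mobiusLift_nonneg ht (arg_wbullet_nonneg k ht0.le))

theorem Blift_arg_wbullet_le (hk : 1 ≤ k) (ht0 : 0 < t) (htc : ((k : ℝ) - 1) / (k + 1) ≤ t)
    (ht1 : t < 1) (hφ : φ ≤ phie k t) : Blift φ t k (wbullet k t).arg ≤ (wbullet k t).arg := by
  rw [Blift_eq_mul_mobiusLift_add]
  linarith [phie_eq hk ht0 htc ht1]

theorem Blift_iterate_le_arg_wbullet (hk : 1 ≤ k) (ht0 : 0 < t)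
    (htc : ((k : ℝ) - 1) / (k + 1) ≤ t) (ht1 : t < 1) (hφ : φ ≤ phie k t)
    (hθ : θ ≤ (wbullet k t).arg) (n : ℕ) : (Blift φ t k)^[n] θ ≤ (wbullet k t).arg := by
  have ht : |t| < 1 := by rwa [abs_of_pos ht0]
  have hmaps : Set.MapsTo (Blift φ t k) (Set.Iic (wbullet k t).arg) (Set.Iic (wbullet k t).arg) :=
    fun _ hx ↦ (Blift_monotone ht φ k hx).trans (Blift_arg_wbullet_le hk ht0 htc ht1 hφ)
  exact hmaps.iterate n hθ

theorem Blift_succ_arg_wbullet_lt_pi (hk : 2 ≤ k) (ht0 : 0 < t)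
    (htc : ((k : ℝ) - 1) / (k + 1) ≤ t) (ht1 : t < 1) (hφ : φ ≤ phie k t) :
    Blift φ t (k + 1) (wbullet k t).arg < π := by
  have ht : |t| < 1 := by rwa [abs_of_pos ht0]
  have hlt := add_mobiusLift_lt_pi ht (arg_wbullet_nonneg k ht0.le)
    (Complex.arg_le_pi _) (neg_lt_cos_arg_wbullet hk ht0 htc ht1)
  have hle := Blift_arg_wbullet_le (one_le_two.trans hk) ht0 htc ht1 hφ
  rw [Blift_eq_mul_mobiusLift_add] at hle ⊢
  push_cast
  linarith

end

theorem stmt11_general (k : ℕ) (hk : 2 ≤ k) (t : ℝ)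
    (htc : ((k : ℝ) - 1) / ((k : ℝ) + 1) ≤ t) (ht1 : t < 1)
    (φ : ℝ) (hφ : φ ≤ phie k t) (n : ℕ) :
    Blift φ t (k + 1) ((Blift φ t k)^[n] φ) < Real.pi := by
  have hk1 : 1 ≤ k := one_le_two.trans hk
  have ht0 : 0 < t :=
    (div_pos (sub_pos.2 (Nat.one_lt_cast.2 hk)) k.cast_add_one_pos).trans_le htc
  have ht : |t| < 1 := by rwa [abs_of_pos ht0]
  have hstart : φ ≤ (wbullet k t).arg := hφ.trans (phie_le_arg_wbullet hk1 ht0 htc ht1)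
  have horbit : (Blift φ t k)^[n] φ ≤ (wbullet k t).arg :=
    Blift_iterate_le_arg_wbullet hk1 ht0 htc ht1 hφ hstart n
  exact (Blift_monotone ht φ (k + 1) horbit).trans_lt
    (Blift_succ_arg_wbullet_lt_pi hk ht0 htc ht1 hφ)

theorem stmt11 (k : ℕ) (hk : 2 ≤ k) (t : ℝ)
    (htc : ((k : ℝ) - 1) / ((k : ℝ) + 1) < t) (ht1 : t < 1)
    (φ : ℝ) (hφ0 : 0 ≤ φ) (hφe : φ < phie k t) (n : ℕ) (hn : 1 ≤ n) :
    Blift φ t (k + 1) ((Blift φ t k)^[n - 1] φ) < Real.pi :=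
  stmt11_general k hk t htc.le ht1 φ hφe.le (n - 1)
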